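/- Let 𝒟 be regularly varying with exponent γ > 1 and let {G_n}_{n≥1} be generated by the erased configuration model with degree sequences IID(𝒟). If 1 < γ < 2 then for any K, δ > 0, lim_{n→∞} P(Σ_{k≥0} |f̂_n(k) − f_n(k)| > K n^{1−γ+δ}) = 0; if γ > 2 then for any K, δ > 0, lim_{n→∞} P(Σ_{k≥0} |f̂_n(k) − f_n(k)| > K n^{−1+δ}) = 0. -/

import Mathlib

open MeasureTheory Filter
open scoped ENNReal NNReal BigOperators

namespace ANNDPaper

/-- A function is slowly varying if `l (λ x) / l x → 1` as `x → ∞` for every `λ > 0`. -/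
def SlowlyVarying (l : ℝ → ℝ) : Prop :=
  ∀ lam : ℝ, 0 < lam → Tendsto (fun x => l (lam * x) / l x) atTop (nhds 1)

/-- A function is eventually monotone if it is monotone on some interval `[K, ∞)`. -/
def EventuallyMonotone (l : ℝ → ℝ) : Prop :=
  ∃ K : ℝ, MonotoneOn l (Set.Ici K) ∨ AntitoneOn l (Set.Ici K)

/-- Cumulative distribution function of a mass function on `ℕ`. -/
noncomputable def cdfOf (f : ℕ → ℝ) (k : ℕ) : ℝ := ∑ j ∈ Finset.range (k + 1), f j

/-- Kantorovich–Rubinstein distance between two mass functions on `ℕ`,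
valued in `ℝ≥0∞`. -/
noncomputable def d1 (f g : ℕ → ℝ) : ℝ≥0∞ :=
  ∑' k : ℕ, ENNReal.ofReal |cdfOf f k - cdfOf g k|

/-- Total variation distance between two mass functions on `ℕ`, valued in `ℝ≥0∞`. -/
noncomputable def dtv (f g : ℕ → ℝ) : ℝ≥0∞ :=
  (∑' k : ℕ, ENNReal.ofReal |f k - g k|) / 2

/-- Mean of a mass function on `ℕ`. -/
noncomputable def meanPMF (f : ℕ → ℝ) : ℝ := ∑' k : ℕ, (k : ℝ) * f k

/-- Size-biased version `f^*(k) = k f(k) / E[f]` of a mass function on `ℕ`. -/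
noncomputable def sizeBiased (f : ℕ → ℝ) (k : ℕ) : ℝ := (k : ℝ) * f k / meanPMF f

/-- `L_n`, the sum of the degrees. -/
def degSum {n : ℕ} (d : Fin n → ℕ) : ℕ := ∑ i, d i

/-- Empirical degree density `f_n(k)`. -/
noncomputable def empDens {n : ℕ} (d : Fin n → ℕ) (k : ℕ) : ℝ :=
  (∑ i, if d i = k then (1 : ℝ) else 0) / (n : ℝ)

/-- Size-biased empirical degree density `f_n^*(k)`. -/
noncomputable def empSB {n : ℕ} (d : Fin n → ℕ) (k : ℕ) : ℝ :=
  (∑ i, if d i = k then (k : ℝ) else 0) / (degSum d : ℝ)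

/-- Size-biased empirical cumulative distribution function `F_n^*(ℓ)`. -/
noncomputable def empSBcdf {n : ℕ} (d : Fin n → ℕ) (l : ℕ) : ℝ :=
  (∑ i, if d i ≤ l then (d i : ℝ) else 0) / (degSum d : ℝ)

/-- Empirical joint degree distribution `h_n(k, ℓ)` of a multigraph with degrees `d`
and edge counts `g` (self-loops counted twice). -/
noncomputable def jointDens {n : ℕ} (d : Fin n → ℕ) (g : Fin n → Fin n → ℕ) (k l : ℕ) : ℝ :=
  (∑ i, ∑ j, if d i = k ∧ d j = l then (g i j : ℝ) else 0) / (degSum d : ℝ)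

/-- Average nearest neighbor degree `Φ_n(k)`. -/
noncomputable def ANND {n : ℕ} (d : Fin n → ℕ) (g : Fin n → Fin n → ℕ) (k : ℕ) : ℝ :=
  if 0 < empDens d k then (∑' l : ℕ, jointDens d g k l * (l : ℝ)) / empSB d k else 0

/-- Average nearest neighbor rank `Θ_n(k)`. -/
noncomputable def ANNR {n : ℕ} (d : Fin n → ℕ) (g : Fin n → Fin n → ℕ) (k : ℕ) : ℝ :=
  if 0 < empDens d k then (∑' l : ℕ, jointDens d g k l * empSBcdf d l) / empSB d k else 0

/-- The degree of node `i` in a multigraph with edge counts `g` (self-loops counted twice). -/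
def degOf {n : ℕ} (g : Fin n → Fin n → ℕ) (i : Fin n) : ℕ := ∑ j, g i j

/-- Erased edge counts: self-loops removed, multiple edges merged. -/
def erase {n : ℕ} (g : Fin n → Fin n → ℕ) (i j : Fin n) : ℕ :=
  if i = j then 0 else min (g i j) 1

/-- Degrees after erasure. -/
def eraseDeg {n : ℕ} (g : Fin n → Fin n → ℕ) (i : Fin n) : ℕ := ∑ j, erase g i j

/-- The stubs (half-edges) attached to the nodes, given a degree sequence `d`. -/
abbrev Stubs {n : ℕ} (d : Fin n → ℕ) : Type := (i : Fin n) × Fin (d i)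

/-- A perfect matching of the stubs: a fixed-point-free involution. -/
def Matching {n : ℕ} (d : Fin n → ℕ) : Type :=
  {σ : Equiv.Perm (Stubs d) // ∀ s, σ s ≠ s ∧ σ (σ s) = s}

instance {n : ℕ} (d : Fin n → ℕ) : MeasurableSpace (Matching d) := ⊤

/-- The uniform probability measure on perfect matchings of the stubs. -/
noncomputable def uniformMatching {n : ℕ} (d : Fin n → ℕ) : Measure (Matching d) :=
  (Nat.card (Matching d) : ℝ≥0∞)⁻¹ • Measure.count

/-- The edge counts `G_{ij}` of the configuration-model multigraph determined by a
matching of the stubs: the number of stubs of `i` matched to stubs of `j`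
(self-loops are automatically counted twice). -/
def cmEdges {n : ℕ} (d : Fin n → ℕ) (σ : Matching d) (i j : Fin n) : ℕ :=
  (Finset.univ.filter (fun s : Fin (d i) => ((σ.1 ⟨i, s⟩).1 = j))).card

/-- Parity correction: add `1` to the last coordinate if the total sum is odd,
making the total even. -/
def parityFix (n : ℕ) (x : Fin n → ℕ) (i : Fin n) : ℕ :=
  if (i : ℕ) = n - 1 ∧ (∑ j, x j) % 2 = 1 then x i + 1 else x i

/-- The law of the degree sequence `IID(𝒟)` of length `n`, where `ν` is the law of `𝒟`:
i.i.d. samples with the last one corrected for parity. -/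
noncomputable def iidLaw (n : ℕ) (ν : Measure ℕ) : Measure (Fin n → ℕ) :=
  Measure.map (parityFix n) (Measure.pi fun _ : Fin n => ν)

/-- The joint law of (degree sequence, edge counts) in the configuration model of size `n`
with degree sequence `IID(𝒟)`, where `ν` is the law of `𝒟`: sample the degrees, then an
independent uniform perfect matching of the stubs. -/
noncomputable def cmLaw (n : ℕ) (ν : Measure ℕ) :
    Measure ((Fin n → ℕ) × (Fin n → Fin n → ℕ)) :=
  (iidLaw n ν).bind fun d => (uniformMatching d).map fun σ => (d, cmEdges d σ)

section comb
open Classical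

instance finiteMatching {n : ℕ} (d : Fin n → ℕ) : Finite (Matching d) :=
  inferInstanceAs (Finite {σ : Equiv.Perm (Stubs d) // ∀ s, σ s ≠ s ∧ σ (σ s) = s})

noncomputable instance fintypeMatching {n : ℕ} (d : Fin n → ℕ) : Fintype (Matching d) :=
  Fintype.ofFinite _

/-- Conjugation of a matching by a transposition. -/
noncomputable def conjM {n : ℕ} {d : Fin n → ℕ} (t t' : Stubs d) (σ : Matching d) : Matching d :=
  ⟨Equiv.swap t t' * σ.1 * Equiv.swap t t', by
    intro s
    refine ⟨fun h => ?_, ?_⟩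
    · have h2 := congrArg (Equiv.swap t t') h
      simp only [Equiv.Perm.mul_apply, Equiv.swap_apply_self] at h2
      have := (σ.2 (Equiv.swap t t' s)).1
      exact this h2
    · simp only [Equiv.Perm.mul_apply, Equiv.swap_apply_self, (σ.2 _).2]⟩

lemma conjM_inj {n : ℕ} {d : Fin n → ℕ} (t t' : Stubs d) : Function.Injective (conjM t t') := by
  intro σ τ h
  have h1 : Equiv.swap t t' * σ.1 * Equiv.swap t t' = Equiv.swap t t' * τ.1 * Equiv.swap t t' :=
    congrArg Subtype.val h
  exact Subtype.ext (mul_left_cancel (mul_right_cancel h1))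

lemma conjM_apply {n : ℕ} {d : Fin n → ℕ} (t t' : Stubs d) (σ : Matching d) (s : Stubs d) :
    (conjM t t' σ).1 s = Equiv.swap t t' (σ.1 (Equiv.swap t t' s)) := rfl

lemma fiber_bound {n : ℕ} {d : Fin n → ℕ} (A : Finset (Matching d)) (s t : Stubs d)
    (T : Finset (Stubs d)) (hst : s ≠ t) (hsT : s ∉ T)
    (hA : ∀ t' ∈ T, ∀ σ ∈ A, σ.1 s = t → conjM t t' σ ∈ A) :
    T.card * (A.filter (fun σ => σ.1 s = t)).card ≤ A.card := by
  calc T.card * (A.filter (fun σ => σ.1 s = t)).card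
      = ∑ t' ∈ T, (A.filter (fun σ => σ.1 s = t)).card := by simp
    _ ≤ ∑ t' ∈ T, (A.filter (fun σ => σ.1 s = t')).card := by
        refine Finset.sum_le_sum fun t' ht' => ?_
        refine Finset.card_le_card_of_injOn (conjM t t') ?_ (conjM_inj t t').injOn
        intro σ hσ
        have hσ' := Finset.mem_filter.1 hσ
        have : s ≠ t' := fun h => hsT (h ▸ ht')
        refine Finset.mem_coe.2 (Finset.mem_filter.2 ⟨hA t' ht' σ hσ'.1 hσ'.2, ?_⟩)
        rw [conjM_apply, Equiv.swap_apply_of_ne_of_ne hst this, hσ'.2, Equiv.swap_apply_left]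
    _ = (A.filter (fun σ => σ.1 s ∈ T)).card := by
        rw [Finset.card_eq_sum_card_fiberwise (f := fun σ : Matching d => σ.1 s) (t := T)]
        · refine Finset.sum_congr rfl fun t' ht' => ?_
          congr 1
          ext σ
          simp only [Finset.mem_filter]
          constructor
          · rintro ⟨h1, h2⟩; exact ⟨⟨h1, h2 ▸ ht'⟩, h2⟩
          · rintro ⟨⟨h1, -⟩, h2⟩; exact ⟨h1, h2⟩
        · intro σ hσ
          exact (Finset.mem_filter.1 hσ).2
    _ ≤ A.card := Finset.card_filter_le _ _

lemma card_stubs {n : ℕ} (d : Fin n → ℕ) : Fintype.card (Stubs d) = ∑ i, d i := by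
  simp [Stubs, Fintype.card_sigma]

lemma one_bound {n : ℕ} {d : Fin n → ℕ} (s t : Stubs d) (hst : s ≠ t) :
    ((∑ i, d i) - 1) * (Finset.univ.filter (fun σ : Matching d => σ.1 s = t)).card
      ≤ Fintype.card (Matching d) := by
  have := fiber_bound Finset.univ s t (Finset.univ.erase s) hst (by simp) (by simp)
  rwa [Finset.card_erase_of_mem (Finset.mem_univ _), Finset.card_univ, Finset.card_univ,
    card_stubs] at this

lemma two_bound {n : ℕ} {d : Fin n → ℕ} (s t u v : Stubs d) (hst : s ≠ t) (hsu : s ≠ u)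
    (hsv : s ≠ v) (htu : t ≠ u) (htv : t ≠ v) (huv : u ≠ v) :
    ((∑ i, d i) - 1) * (((∑ i, d i) - 3) *
      (Finset.univ.filter (fun σ : Matching d => σ.1 s = t ∧ σ.1 u = v)).card)
      ≤ Fintype.card (Matching d) := by
  refine le_trans (Nat.mul_le_mul_left _ ?_) (one_bound s t hst)
  have := fiber_bound (Finset.univ.filter (fun σ : Matching d => σ.1 s = t)) u v
    (((Finset.univ.erase s).erase t).erase u) huv (by simp) (by
      intro t' ht' σ hσ _
      simp only [Finset.mem_erase, Finset.mem_univ, and_true] at ht'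
      simp only [Finset.mem_filter, Finset.mem_univ, true_and] at hσ ⊢
      rw [conjM_apply, Equiv.swap_apply_of_ne_of_ne hsv (Ne.symm ht'.2.2), hσ,
        Equiv.swap_apply_of_ne_of_ne htv (Ne.symm ht'.2.1)])
  rw [Finset.filter_filter] at this
  convert this using 2
  rw [Finset.card_erase_of_mem, Finset.card_erase_of_mem, Finset.card_erase_of_mem,
    Finset.card_univ, card_stubs]
  · omega
  · simp
  · simp [Ne.symm hst]
  · simp [Ne.symm hsu, Ne.symm htu]

/-- The entry `(i, j)` is changed by the erasure. -/
def Bad {n : ℕ} (d : Fin n → ℕ) (i j : Fin n) (σ : Matching d) : Prop :=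
  erase (cmEdges d σ) i j ≠ cmEdges d σ i j

lemma bad_diag {n : ℕ} (d : Fin n → ℕ) (i : Fin n) :
    ((∑ i, d i) - 1) * (Finset.univ.filter (Bad d i i)).card
      ≤ d i ^ 2 * Fintype.card (Matching d) := by
  have hsub : Finset.univ.filter (Bad d i i) ⊆
      ((Finset.univ : Finset (Fin (d i) × Fin (d i))).filter (fun q => q.1 ≠ q.2)).biUnion
        (fun q => Finset.univ.filter (fun σ : Matching d => σ.1 ⟨i, q.1⟩ = ⟨i, q.2⟩)) := by
    intro σ hσ
    have h := (Finset.mem_filter.1 hσ).2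
    simp only [Bad, erase, if_true] at h
    have h0 : 0 < cmEdges d σ i i := Nat.pos_of_ne_zero (Ne.symm h)
    obtain ⟨s, hs⟩ := Finset.card_pos.1 h0
    have hs' := (Finset.mem_filter.1 hs).2
    obtain ⟨t, ht⟩ : ∃ t : Fin (d i), σ.1 ⟨i, s⟩ = ⟨i, t⟩ := by
      generalize σ.1 ⟨i, s⟩ = z at hs'
      obtain ⟨j, t⟩ := z
      subst hs'
      exact ⟨t, rfl⟩
    simp only [Finset.mem_biUnion, Finset.mem_filter, Finset.mem_univ, true_and]
    refine ⟨(s, t), ?_, ht⟩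
    intro h
    simp only at h
    subst h
    exact (σ.2 _).1 ht
  calc _ ≤ ((∑ i, d i) - 1) * ∑ q ∈ (Finset.univ : Finset (Fin (d i) × Fin (d i))).filter
          (fun q => q.1 ≠ q.2),
          (Finset.univ.filter (fun σ : Matching d => σ.1 ⟨i, q.1⟩ = ⟨i, q.2⟩)).card :=
        Nat.mul_le_mul_left _ ((Finset.card_le_card hsub).trans Finset.card_biUnion_le)
    _ ≤ ∑ q ∈ (Finset.univ : Finset (Fin (d i) × Fin (d i))).filter
          (fun q => q.1 ≠ q.2), Fintype.card (Matching d) := by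
        rw [Finset.mul_sum]
        refine Finset.sum_le_sum fun q hq => one_bound _ _ ?_
        have := (Finset.mem_filter.1 hq).2
        simpa using this
    _ ≤ _ := by
        rw [Finset.sum_const, smul_eq_mul]
        refine Nat.mul_le_mul_right _ ((Finset.card_filter_le _ _).trans ?_)
        simp [sq]

lemma bad_off {n : ℕ} (d : Fin n → ℕ) (i j : Fin n) (hij : i ≠ j) :
    ((∑ i, d i) - 1) * (((∑ i, d i) - 3) * (Finset.univ.filter (Bad d i j)).card)
      ≤ (d i * d j) ^ 2 * Fintype.card (Matching d) := by
  set Q := ((Finset.univ : Finset ((Fin (d i) × Fin (d j)) × (Fin (d i) × Fin (d j)))).filter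
    (fun q => q.1.1 ≠ q.2.1 ∧ q.1.2 ≠ q.2.2)) with hQ
  have hsub : Finset.univ.filter (Bad d i j) ⊆
      Q.biUnion
        (fun q => Finset.univ.filter (fun σ : Matching d =>
          σ.1 ⟨i, q.1.1⟩ = ⟨j, q.1.2⟩ ∧ σ.1 ⟨i, q.2.1⟩ = ⟨j, q.2.2⟩)) := by
    intro σ hσ
    have h := (Finset.mem_filter.1 hσ).2
    simp only [Bad, erase, if_neg hij] at h
    have h0 : 1 < cmEdges d σ i j := by
      by_contra h'
      exact h (min_eq_left (by omega))
    obtain ⟨s, hs, u, hu, hsu⟩ := Finset.one_lt_card.1 h0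
    have key : ∀ s : Fin (d i), (σ.1 ⟨i, s⟩).1 = j → ∃ t : Fin (d j), σ.1 ⟨i, s⟩ = ⟨j, t⟩ := by
      intro s hs'
      generalize σ.1 ⟨i, s⟩ = z at hs'
      obtain ⟨j, t⟩ := z
      subst hs'
      exact ⟨t, rfl⟩
    obtain ⟨t, ht⟩ := key s (Finset.mem_filter.1 hs).2
    obtain ⟨v, hv⟩ := key u (Finset.mem_filter.1 hu).2
    simp only [hQ, Finset.mem_biUnion, Finset.mem_filter, Finset.mem_univ, true_and]
    refine ⟨((s, t), (u, v)), ⟨hsu, ?_⟩, ht, hv⟩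
    rintro h
    simp only at h
    subst h
    have := σ.1.injective (ht.trans hv.symm)
    simp at this
    exact hsu this
  calc _ ≤ ((∑ i, d i) - 1) * (((∑ i, d i) - 3) * ∑ q ∈ Q,
          (Finset.univ.filter (fun σ : Matching d =>
          σ.1 ⟨i, q.1.1⟩ = ⟨j, q.1.2⟩ ∧ σ.1 ⟨i, q.2.1⟩ = ⟨j, q.2.2⟩)).card) :=
        Nat.mul_le_mul_left _ (Nat.mul_le_mul_left _
          ((Finset.card_le_card hsub).trans Finset.card_biUnion_le))
    _ ≤ ∑ q ∈ Q, Fintype.card (Matching d) := by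
        rw [Finset.mul_sum, Finset.mul_sum]
        refine Finset.sum_le_sum fun q hq => ?_
        have := (Finset.mem_filter.1 hq).2
        have hji := hij.symm
        apply two_bound <;> simp [hij, hji, this.1, this.2]
    _ ≤ _ := by
        rw [Finset.sum_const, smul_eq_mul]
        refine Nat.mul_le_mul_right _ ((Finset.card_filter_le _ _).trans ?_)
        simp [sq]

lemma sum_cmEdges {n : ℕ} (d : Fin n → ℕ) (σ : Matching d) (i : Fin n) :
    ∑ j, cmEdges d σ i j = d i := by
  unfold cmEdges
  rw [← Finset.card_eq_sum_card_fiberwise (fun _ _ => Finset.mem_coe.2 (Finset.mem_univ _))]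
  simp

lemma tsum_emp_le {n : ℕ} (a b : Fin n → ℕ) :
    ∑' k : ℕ, |empDens a k - empDens b k| ≤
      (2 / (n : ℝ)) * ∑ i, (if a i ≠ b i then (1 : ℝ) else 0) := by
  set T : Finset ℕ := Finset.univ.image a ∪ Finset.univ.image b with hT
  have ha : ∀ i, a i ∈ T := fun i => by simp [hT]
  have hb : ∀ i, b i ∈ T := fun i => by simp [hT]
  rw [tsum_eq_sum (s := T)]
  · calc ∑ k ∈ T, |empDens a k - empDens b k|
        ≤ ∑ k ∈ T, (∑ i, (if a i ≠ b i then
            (if a i = k then (1 : ℝ) else 0) + (if b i = k then (1 : ℝ) else 0) else 0)) / n := by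
          refine Finset.sum_le_sum fun k _ => ?_
          unfold empDens
          rw [← sub_div, abs_div, abs_of_nonneg (Nat.cast_nonneg n : (0 : ℝ) ≤ n),
            ← Finset.sum_sub_distrib]
          refine div_le_div_of_nonneg_right ?_ (Nat.cast_nonneg n)
          refine (Finset.abs_sum_le_sum_abs _ _).trans (Finset.sum_le_sum fun i _ => ?_)
          split_ifs <;> simp_all
      _ = _ := by
          rw [← Finset.sum_div, Finset.sum_comm, div_mul_eq_mul_div, Finset.mul_sum]
          congr 1
          refine Finset.sum_congr rfl fun i _ => ?_
          by_cases h : a i ≠ b i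
          · simp only [if_pos h, Finset.sum_add_distrib]
            rw [Finset.sum_ite_eq, Finset.sum_ite_eq, if_pos (ha i), if_pos (hb i)]
            norm_num
          · simp [h]
  · intro k hk
    have h1 : ∀ i, a i ≠ k := fun i h => hk (h ▸ ha i)
    have h2 : ∀ i, b i ≠ k := fun i h => hk (h ▸ hb i)
    simp [empDens, h1, h2]

lemma tsum_le_bad {n : ℕ} (d : Fin n → ℕ) (σ : Matching d) :
    ∑' k : ℕ, |empDens (eraseDeg (cmEdges d σ)) k - empDens d k| ≤
      (2 / (n : ℝ)) * ∑ i, ∑ j, (if Bad d i j σ then (1 : ℝ) else 0) := by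
  refine (tsum_emp_le _ _).trans (mul_le_mul_of_nonneg_left ?_ (by positivity))
  refine Finset.sum_le_sum fun i _ => ?_
  split_ifs with h
  · by_contra hlt
    apply h
    rw [← sum_cmEdges d σ i]
    refine Finset.sum_congr rfl fun j _ => ?_
    by_contra hb
    apply hlt
    have : (if Bad d i j σ then (1 : ℝ) else 0) = 1 := if_pos hb
    refine this.symm.le.trans ?_
    exact Finset.single_le_sum (f := fun j => if Bad d i j σ then (1 : ℝ) else 0)
      (fun j _ => by positivity) (Finset.mem_univ j)
  · positivity

end comb
section condb
open Classical

lemma rpow_interp {y r q : ℝ} (hy : 0 ≤ y) (hq0 : 0 ≤ q) (hq1 : q ≤ 1) (h1 : r ≤ 1)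
    (h2 : r ≤ 6 * y) : r ≤ 6 * y ^ q := by
  rcases le_total y 1 with h | h
  · have : y ≤ y ^ q := by
      rcases hy.eq_or_lt with rfl | hpos
      · positivity
      · calc y = y ^ (1 : ℝ) := (Real.rpow_one y).symm
          _ ≤ y ^ q := Real.rpow_le_rpow_of_exponent_ge hpos h hq1
    linarith
  · have := Real.one_le_rpow h hq0
    linarith

lemma bad_diag_real {n : ℕ} (hn : 4 ≤ n) (d : Fin n → ℕ) (hd : ∀ i, 1 ≤ d i) (p : ℝ)
    (hp0 : 0 ≤ p) (hp2 : p ≤ 2) (i : Fin n) (hM : 0 < Fintype.card (Matching d)) :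
    ((Finset.univ.filter (Bad d i i)).card : ℝ) / Fintype.card (Matching d)
      ≤ 6 * ((d i : ℝ) ^ p * (n : ℝ) ^ (-p / 2)) := by
  have hMr : (0 : ℝ) < Fintype.card (Matching d) := by exact_mod_cast hM
  have hL : n ≤ ∑ i, d i := by
    calc n = ∑ i : Fin n, 1 := by simp
      _ ≤ _ := Finset.sum_le_sum fun i _ => hd i
  have hnr : (4 : ℝ) ≤ n := by exact_mod_cast hn
  have hb := bad_diag d i
  have hb' : (n - 1) * (Finset.univ.filter (Bad d i i)).card
      ≤ d i ^ 2 * Fintype.card (Matching d) :=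
    (Nat.mul_le_mul_right _ (Nat.sub_le_sub_right hL 1)).trans hb
  have hbr : ((n : ℝ) - 1) * ((Finset.univ.filter (Bad d i i)).card : ℝ)
      ≤ (d i : ℝ) ^ 2 * Fintype.card (Matching d) := by
    have := (Nat.cast_le (α := ℝ)).2 hb'
    rw [Nat.cast_mul, Nat.cast_sub (by omega)] at this
    push_cast at this
    exact this
  set B : ℝ := ((Finset.univ.filter (Bad d i i)).card : ℝ) with hB
  have hB0 : 0 ≤ B := Nat.cast_nonneg _
  have hBM : B ≤ Fintype.card (Matching d) := by
    rw [hB]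
    exact_mod_cast Finset.card_le_univ _
  have key : B / Fintype.card (Matching d) ≤ 6 * ((d i : ℝ) ^ 2 / n) ^ (p / 2) := by
    apply rpow_interp (by positivity) (by linarith) (by linarith)
    · rw [div_le_one hMr]
      exact hBM
    · rw [div_le_iff₀ hMr, mul_div_assoc', div_mul_eq_mul_div, le_div_iff₀ (by linarith)]
      nlinarith
  refine key.trans (le_of_eq ?_)
  rw [Real.div_rpow (by positivity) (by positivity), ← Real.rpow_natCast, ← Real.rpow_mul
    (by positivity), div_eq_mul_inv, ← Real.rpow_neg (by positivity)]
  congr 3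
  · push_cast; ring
  · ring

lemma bad_off_real {n : ℕ} (hn : 4 ≤ n) (d : Fin n → ℕ) (hd : ∀ i, 1 ≤ d i) (p : ℝ)
    (hp0 : 0 ≤ p) (hp2 : p ≤ 2) (i j : Fin n) (hij : i ≠ j)
    (hM : 0 < Fintype.card (Matching d)) :
    ((Finset.univ.filter (Bad d i j)).card : ℝ) / Fintype.card (Matching d)
      ≤ 6 * ((d i : ℝ) ^ p * (d j : ℝ) ^ p * (n : ℝ) ^ (-p)) := by
  have hMr : (0 : ℝ) < Fintype.card (Matching d) := by exact_mod_cast hM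
  have hL : n ≤ ∑ i, d i := by
    calc n = ∑ i : Fin n, 1 := by simp
      _ ≤ _ := Finset.sum_le_sum fun i _ => hd i
  have hnr : (4 : ℝ) ≤ n := by exact_mod_cast hn
  have hb := bad_off d i j hij
  have hb' : (n - 1) * ((n - 3) * (Finset.univ.filter (Bad d i j)).card)
      ≤ (d i * d j) ^ 2 * Fintype.card (Matching d) :=
    (Nat.mul_le_mul (Nat.sub_le_sub_right hL 1)
      (Nat.mul_le_mul_right _ (Nat.sub_le_sub_right hL 3))).trans hb
  have hbr : ((n : ℝ) - 1) * (((n : ℝ) - 3) * ((Finset.univ.filter (Bad d i j)).card : ℝ))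
      ≤ ((d i : ℝ) * d j) ^ 2 * Fintype.card (Matching d) := by
    have := (Nat.cast_le (α := ℝ)).2 hb'
    rw [Nat.cast_mul, Nat.cast_mul, Nat.cast_sub (by omega), Nat.cast_sub (by omega)] at this
    push_cast at this
    exact this
  set B : ℝ := ((Finset.univ.filter (Bad d i j)).card : ℝ) with hB
  have hB0 : 0 ≤ B := Nat.cast_nonneg _
  have hBM : B ≤ Fintype.card (Matching d) := by
    rw [hB]
    exact_mod_cast Finset.card_le_univ _
  have key : B / Fintype.card (Matching d) ≤ 6 * (((d i : ℝ) * d j / n) ^ 2) ^ (p / 2) := by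
    apply rpow_interp (by positivity) (by linarith) (by linarith)
    · rw [div_le_one hMr]
      exact hBM
    · rw [div_le_iff₀ hMr, div_pow, mul_div_assoc', div_mul_eq_mul_div,
        le_div_iff₀ (by positivity)]
      have h6 : (n : ℝ) ^ 2 ≤ 6 * (((n : ℝ) - 1) * ((n : ℝ) - 3)) := by nlinarith
      nlinarith [mul_le_mul_of_nonneg_right h6 hB0]
  refine key.trans (le_of_eq ?_)
  rw [← Real.rpow_natCast, ← Real.rpow_mul (by positivity)]
  have : ((2 : ℕ) : ℝ) * (p / 2) = p := by push_cast; ring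
  rw [this, Real.div_rpow (by positivity) (by positivity), Real.mul_rpow (by positivity)
    (by positivity), div_eq_mul_inv, ← Real.rpow_neg (by positivity)]

lemma sum_bad_le {n : ℕ} (hn : 4 ≤ n) (d : Fin n → ℕ) (hd : ∀ i, 1 ≤ d i) (p : ℝ)
    (hp0 : 0 ≤ p) (hp2 : p ≤ 2) (hM : 0 < Fintype.card (Matching d)) :
    ∑ i, ∑ j, ((Finset.univ.filter (Bad d i j)).card : ℝ) / Fintype.card (Matching d)
      ≤ 12 * (∑ i, (d i : ℝ) ^ p) ^ 2 * (n : ℝ) ^ (-p) := by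
  have hnr : (4 : ℝ) ≤ n := by exact_mod_cast hn
  have hn0 : (0 : ℝ) < n := by linarith
  set S := ∑ i, (d i : ℝ) ^ p with hS
  have hSn : (n : ℝ) ≤ S := by
    calc (n : ℝ) = ∑ i : Fin n, (1 : ℝ) := by simp
      _ ≤ _ := Finset.sum_le_sum fun i _ =>
        Real.one_le_rpow (by exact_mod_cast hd i) hp0
  have hone : ∀ i j, ((Finset.univ.filter (Bad d i j)).card : ℝ) / Fintype.card (Matching d)
      ≤ 6 * ((d i : ℝ) ^ p * (d j : ℝ) ^ p * (n : ℝ) ^ (-p)) +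
        (if i = j then 6 * ((d i : ℝ) ^ p * (n : ℝ) ^ (-p / 2)) else 0) := by
    intro i j
    split_ifs with h
    · subst h
      have := bad_diag_real hn d hd p hp0 hp2 i hM
      have h2 : 0 ≤ 6 * ((d i : ℝ) ^ p * (d i : ℝ) ^ p * (n : ℝ) ^ (-p)) := by positivity
      linarith
    · have := bad_off_real hn d hd p hp0 hp2 i j h hM
      linarith
  have hpow : (n : ℝ) ^ (-p / 2) ≤ n * (n : ℝ) ^ (-p) := by
    calc (n : ℝ) ^ (-p / 2) ≤ (n : ℝ) ^ (1 + -p) :=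
          Real.rpow_le_rpow_of_exponent_le (by linarith) (by linarith)
      _ = _ := by rw [Real.rpow_add hn0, Real.rpow_one]
  calc _ ≤ ∑ i, ∑ j, (6 * ((d i : ℝ) ^ p * (d j : ℝ) ^ p * (n : ℝ) ^ (-p)) +
        (if i = j then 6 * ((d i : ℝ) ^ p * (n : ℝ) ^ (-p / 2)) else 0)) :=
        Finset.sum_le_sum fun i _ => Finset.sum_le_sum fun j _ => hone i j
    _ = 6 * (n : ℝ) ^ (-p) * S ^ 2 + 6 * (n : ℝ) ^ (-p / 2) * S := by
        simp_rw [Finset.sum_add_distrib, Finset.sum_ite_eq, Finset.mem_univ, if_true]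
        rw [sq, hS, Finset.sum_mul_sum]
        simp_rw [Finset.mul_sum]
        congr 1
        · exact Finset.sum_congr rfl fun i _ => Finset.sum_congr rfl fun j _ => by ring
        · exact Finset.sum_congr rfl fun i _ => by ring
    _ ≤ _ := by
        have hq : 0 < (n : ℝ) ^ (-p) := by positivity
        have hS0 : 0 < S := by linarith
        have h1 : (n : ℝ) ^ (-p / 2) * S ≤ (n * (n : ℝ) ^ (-p)) * S :=
          mul_le_mul_of_nonneg_right hpow hS0.le
        have h2 : (n * (n : ℝ) ^ (-p)) * S ≤ (S * (n : ℝ) ^ (-p)) * S := by gcongr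
        nlinarith

lemma cond_bound {n : ℕ} (hn : 4 ≤ n) (d : Fin n → ℕ) (hd : ∀ i, 1 ≤ d i) (p : ℝ)
    (hp0 : 0 ≤ p) (hp2 : p ≤ 2) (t : ℝ) (ht : 0 < t) :
    uniformMatching d {σ | t < ∑' k : ℕ, |empDens (eraseDeg (cmEdges d σ)) k - empDens d k|} ≤
      ENNReal.ofReal ((∑ i, (d i : ℝ) ^ p) * √(24 * (n : ℝ) ^ (-p - 1) / t)) := by
  set A : Set (Matching d) :=
    {σ | t < ∑' k : ℕ, |empDens (eraseDeg (cmEdges d σ)) k - empDens d k|} with hA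
  rcases Nat.eq_zero_or_pos (Fintype.card (Matching d)) with h0 | hM
  · have : IsEmpty (Matching d) := Fintype.card_eq_zero_iff.1 h0
    rw [Set.eq_empty_of_isEmpty A]
    simp
  have hMr : (0 : ℝ) < Fintype.card (Matching d) := by exact_mod_cast hM
  have hnr : (4 : ℝ) ≤ n := by exact_mod_cast hn
  have hn0 : (0 : ℝ) < n := by linarith
  set F : Finset (Matching d) := Finset.univ.filter (fun σ => σ ∈ A) with hF
  set S := ∑ i, (d i : ℝ) ^ p with hS
  have hS0 : 0 ≤ S := Finset.sum_nonneg fun i _ => by positivity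
  set r : ℝ := (F.card : ℝ) / Fintype.card (Matching d) with hr
  have hr0 : 0 ≤ r := by positivity
  have hr1 : r ≤ 1 := by
    rw [hr, div_le_one hMr]
    exact_mod_cast Finset.card_le_univ _
  have hmk : (F.card : ℝ) * t ≤ (2 / (n : ℝ)) *
      ∑ i, ∑ j, ((Finset.univ.filter (Bad d i j)).card : ℝ) := by
    calc (F.card : ℝ) * t = ∑ σ ∈ F, t := by simp
      _ ≤ ∑ σ ∈ F, (2 / (n : ℝ)) * ∑ i, ∑ j, (if Bad d i j σ then (1 : ℝ) else 0) := by
          refine Finset.sum_le_sum fun σ hσ => ?_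
          have h1 : t < ∑' k : ℕ, |empDens (eraseDeg (cmEdges d σ)) k - empDens d k| :=
            (Finset.mem_filter.1 hσ).2
          exact h1.le.trans (tsum_le_bad d σ)
      _ ≤ ∑ σ, (2 / (n : ℝ)) * ∑ i, ∑ j, (if Bad d i j σ then (1 : ℝ) else 0) :=
          Finset.sum_le_sum_of_subset_of_nonneg (Finset.subset_univ _)
            (fun σ _ _ => by positivity)
      _ = _ := by
          rw [← Finset.mul_sum, Finset.sum_comm]
          congr 1
          refine Finset.sum_congr rfl fun i _ => ?_
          rw [Finset.sum_comm]
          refine Finset.sum_congr rfl fun j _ => ?_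
          simp
  have hsb := sum_bad_le hn d hd p hp0 hp2 hM
  simp_rw [← Finset.sum_div] at hsb
  have hrt : r * t ≤ 24 * S ^ 2 * (n : ℝ) ^ (-p - 1) := by
    have e : (n : ℝ) ^ (-p - 1) = (n : ℝ) ^ (-p) / n := by
      rw [Real.rpow_sub hn0, Real.rpow_one]
    calc r * t = (F.card : ℝ) * t / Fintype.card (Matching d) := by rw [hr]; ring
      _ ≤ ((2 / (n : ℝ)) * ∑ i, ∑ j, ((Finset.univ.filter (Bad d i j)).card : ℝ)) /
          Fintype.card (Matching d) := by gcongr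
      _ = (2 / (n : ℝ)) * ((∑ i, ∑ j, ((Finset.univ.filter (Bad d i j)).card : ℝ)) /
          Fintype.card (Matching d)) := by ring
      _ ≤ (2 / (n : ℝ)) * (12 * S ^ 2 * (n : ℝ) ^ (-p)) := by gcongr
      _ = _ := by rw [e]; ring
  have hrs : r ≤ S * √(24 * (n : ℝ) ^ (-p - 1) / t) := by
    calc r ≤ √r := by
          apply Real.le_sqrt_of_sq_le
          nlinarith
      _ ≤ √(S ^ 2 * (24 * (n : ℝ) ^ (-p - 1) / t)) := by
          apply Real.sqrt_le_sqrt
          rw [mul_div_assoc', le_div_iff₀ ht]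
          linarith
      _ = _ := by
          rw [Real.sqrt_mul (sq_nonneg _), Real.sqrt_sq hS0]
  refine le_trans (le_of_eq ?_) (ENNReal.ofReal_le_ofReal hrs)
  have hAF : A = (F : Set (Matching d)) := by ext; simp [hF]
  rw [hr, ENNReal.ofReal_div_of_pos hMr, ENNReal.ofReal_natCast, ENNReal.ofReal_natCast,
    uniformMatching, Measure.smul_apply, hAF, Measure.count_apply_finset', smul_eq_mul,
    Nat.card_eq_fintype_card, ENNReal.div_eq_inv_mul]
  exact MeasurableSpace.measurableSet_top

end condb
lemma potter (l : ℝ → ℝ) (hsv : SlowlyVarying l) (hmono : EventuallyMonotone l) (ε : ℝ)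
    (hε : 0 < ε) : ∃ C x0 : ℝ, 0 < x0 ∧ ∀ x, x0 ≤ x → |l x| ≤ C * x ^ ε := by
  have h2 := hsv 2 two_pos
  have h1lt : (1 : ℝ) < 2 ^ ε := Real.one_lt_rpow (by norm_num) hε
  have hev := (h2.eventually (lt_mem_nhds (show (0 : ℝ) < 1 by norm_num))).and
    (h2.eventually (gt_mem_nhds h1lt))
  obtain ⟨x1, hx1⟩ := eventually_atTop.1 hev
  obtain ⟨K, hK⟩ := hmono
  set x0 := max (max x1 K) 1 with hx0
  have hx0pos : 0 < x0 := lt_of_lt_of_le one_pos (le_max_right _ _)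
  have hx01 : x1 ≤ x0 := (le_max_left _ _).trans (le_max_left _ _)
  have hx0K : K ≤ x0 := (le_max_right _ _).trans (le_max_left _ _)
  set M := max |l x0| |l (2 * x0)| with hM
  have hMn : 0 ≤ M := (abs_nonneg _).trans (le_max_left _ _)
  have hstep : ∀ x, x0 ≤ x → |l (2 * x)| ≤ 2 ^ ε * |l x| := by
    intro x hx
    obtain ⟨ha, hb⟩ := hx1 x (hx01.trans hx)
    have hne : l x ≠ 0 := by
      intro h; rw [h, div_zero] at ha; exact lt_irrefl _ ha
    have : |l (2 * x)| / |l x| ≤ 2 ^ ε := by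
      rw [← abs_div, abs_of_pos ha]; exact hb.le
    exact (div_le_iff₀ (abs_pos.2 hne)).1 this
  refine ⟨M / x0 ^ ε, x0, hx0pos, ?_⟩
  have hind : ∀ j : ℕ, ∀ x, x0 ≤ x → x ≤ 2 ^ (j + 1) * x0 → |l x| ≤ M / x0 ^ ε * x ^ ε := by
    intro j
    induction j with
    | zero =>
      intro x hx hx2
      have hx2' : x ≤ 2 * x0 := by simpa using hx2
      have hb : |l x| ≤ M := by
        rcases hK with h | h
        · have a := h (Set.mem_Ici.2 hx0K) (Set.mem_Ici.2 (hx0K.trans hx)) hx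
          have b := h (Set.mem_Ici.2 (hx0K.trans hx)) (Set.mem_Ici.2 (hx0K.trans (hx.trans hx2'))) hx2'
          exact abs_le_max_abs_abs a b
        · have a := h (Set.mem_Ici.2 hx0K) (Set.mem_Ici.2 (hx0K.trans hx)) hx
          have b := h (Set.mem_Ici.2 (hx0K.trans hx)) (Set.mem_Ici.2 (hx0K.trans (hx.trans hx2'))) hx2'
          rw [hM, max_comm]
          exact abs_le_max_abs_abs b a
      refine hb.trans ?_
      rw [div_mul_eq_mul_div, le_div_iff₀ (Real.rpow_pos_of_pos hx0pos _)]
      exact mul_le_mul_of_nonneg_left (Real.rpow_le_rpow hx0pos.le hx hε.le) hMn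
    | succ j ih =>
      intro x hx hx2
      by_cases hlt : x ≤ 2 ^ (j + 1) * x0
      · exact ih x hx hlt
      · push Not at hlt
        have hp : (1 : ℝ) ≤ 2 ^ j := one_le_pow₀ (by norm_num)
        have h3 : x0 ≤ x / 2 := by
          rw [pow_succ] at hlt
          nlinarith
        have h4 := ih (x / 2) h3 (by rw [pow_succ] at hx2; linarith)
        have h5 := hstep (x / 2) h3
        rw [mul_div_cancel₀ x (two_ne_zero)] at h5
        refine h5.trans ((mul_le_mul_of_nonneg_left h4 (by positivity)).trans (le_of_eq ?_))
        rw [Real.div_rpow (by linarith) (by norm_num)]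
        field_simp
  intro x hx
  obtain ⟨j, hj⟩ := pow_unbounded_of_one_lt (x / x0) (one_lt_two : (1 : ℝ) < 2)
  refine hind j x hx ?_
  rw [div_lt_iff₀ hx0pos] at hj
  refine hj.le.trans (mul_le_mul_of_nonneg_right ?_ hx0pos.le)
  exact pow_le_pow_right₀ (by norm_num) (Nat.le_succ j)

lemma moment_finite (ν : Measure ℕ) [IsProbabilityMeasure ν] (f : ℕ → ℝ)
    (hf : ∀ k, f k = (ν {k}).toReal)
    (γ : ℝ)
    (l : ℝ → ℝ) (hsv : SlowlyVarying l) (hmono : EventuallyMonotone l)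
    (hreg : ∀ k : ℕ, 1 ≤ k → f k = l k * (k : ℝ) ^ (-γ - 1)) (p : ℝ) (hp0 : 0 ≤ p) (hp : p < γ) :
    ∫⁻ k, ENNReal.ofReal (((k : ℝ) + 1) ^ p) ∂ν ≠ ⊤ := by
  obtain ⟨C, x0, hx0, hC⟩ := potter l hsv hmono ((γ - p) / 2) (by linarith)
  have hsum : Summable (fun k : ℕ => ((k : ℝ) + 1) ^ p * f k) := by
    have hs : Summable (fun k : ℕ => (2 ^ p * C) * (k : ℝ) ^ (-1 - (γ - p) / 2)) :=
      (Real.summable_nat_rpow.2 (by linarith)).mul_left _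
    refine Summable.of_norm_bounded_eventually_nat hs ?_
    filter_upwards [eventually_ge_atTop (max 1 ⌈x0⌉₊)] with k hk
    have hk1 : 1 ≤ k := (le_max_left _ _).trans hk
    have hk0 : x0 ≤ k := (Nat.le_ceil x0).trans (by exact_mod_cast (le_max_right _ _).trans hk)
    have hkpos : (0 : ℝ) < k := by exact_mod_cast hk1
    have hk1' : (1 : ℝ) ≤ k := by exact_mod_cast hk1
    have hle : ((k : ℝ) + 1) ^ p ≤ 2 ^ p * (k : ℝ) ^ p := by
      rw [← Real.mul_rpow (by norm_num) hkpos.le]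
      exact Real.rpow_le_rpow (by positivity) (by linarith) hp0
    rw [hreg k hk1, norm_mul, norm_mul, Real.norm_of_nonneg (by positivity),
      Real.norm_of_nonneg (by positivity : (0 : ℝ) ≤ (k : ℝ) ^ (-γ - 1)), Real.norm_eq_abs]
    calc ((k : ℝ) + 1) ^ p * (|l k| * (k : ℝ) ^ (-γ - 1))
        ≤ (2 ^ p * (k : ℝ) ^ p) * ((C * (k : ℝ) ^ ((γ - p) / 2)) * (k : ℝ) ^ (-γ - 1)) := by
          gcongr
          exact hC k hk0
      _ = (2 ^ p * C) * ((k : ℝ) ^ p * (k : ℝ) ^ ((γ - p) / 2) * (k : ℝ) ^ (-γ - 1)) := by ring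
      _ = _ := by
          rw [← Real.rpow_add hkpos, ← Real.rpow_add hkpos]
          congr 2
          ring
  rw [lintegral_countable']
  have : ∀ k : ℕ, ENNReal.ofReal (((k : ℝ) + 1) ^ p) * ν {k}
      = ENNReal.ofReal (((k : ℝ) + 1) ^ p * f k) := by
    intro k
    rw [ENNReal.ofReal_mul (by positivity), hf k, ENNReal.ofReal_toReal (measure_ne_top _ _)]
  simp_rw [this]
  exact hsum.tsum_ofReal_ne_top
lemma law_bound (ν : Measure ℕ) [IsProbabilityMeasure ν] (hzero : ν {0} = 0) (n : ℕ) (hn : 4 ≤ n)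
    (p : ℝ) (hp0 : 0 ≤ p) (hp2 : p ≤ 2) (t : ℝ) (ht : 0 < t) :
    (cmLaw n ν) {q : (Fin n → ℕ) × (Fin n → Fin n → ℕ) |
      t < ∑' k : ℕ, |empDens (eraseDeg q.2) k - empDens q.1 k|} ≤
    ENNReal.ofReal (n * √(24 * (n : ℝ) ^ (-p - 1) / t)) *
      ∫⁻ k, ENNReal.ofReal (((k : ℝ) + 1) ^ p) ∂ν := by
  set W : Set ((Fin n → ℕ) × (Fin n → Fin n → ℕ)) := {q |
      t < ∑' k : ℕ, |empDens (eraseDeg q.2) k - empDens q.1 k|} with hW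
  have hWm : MeasurableSet W := MeasurableSet.of_discrete
  set c := √(24 * (n : ℝ) ^ (-p - 1) / t) with hc
  have hc0 : 0 ≤ c := Real.sqrt_nonneg _
  have hpos : ∀ᵐ x ∂(Measure.pi fun _ : Fin n => ν), ∀ i, x i ≠ 0 := by
    rw [ae_all_iff]
    intro i
    have h1 : ∀ᵐ k ∂ν, k ≠ 0 := by
      rw [ae_iff]
      simpa using hzero
    exact (measurePreserving_eval (fun _ : Fin n => ν) i).quasiMeasurePreserving.ae h1
  unfold cmLaw
  rw [Measure.bind_apply hWm (measurable_of_countable _).aemeasurable]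
  unfold iidLaw
  rw [lintegral_map (measurable_of_countable _) (measurable_of_countable _)]
  calc _ ≤ ∫⁻ x, ∑ i, ENNReal.ofReal c * ENNReal.ofReal (((x i : ℝ) + 1) ^ p)
        ∂(Measure.pi fun _ : Fin n => ν) := by
        refine lintegral_mono_ae ?_
        filter_upwards [hpos] with x hx
        have hxd : ∀ i, 1 ≤ parityFix n x i := by
          intro i
          have := hx i
          unfold parityFix
          split_ifs <;> omega
        have hxu : ∀ i, parityFix n x i ≤ x i + 1 := by
          intro i
          unfold parityFix
          split_ifs <;> omega
        rw [Measure.map_apply (fun _ _ => MeasurableSpace.measurableSet_top) hWm]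
        refine (cond_bound hn (parityFix n x) hxd p hp0 hp2 t ht).trans ?_
        rw [← Finset.mul_sum, ← ENNReal.ofReal_sum_of_nonneg (fun i _ => by positivity),
          ← ENNReal.ofReal_mul hc0, mul_comm]
        apply ENNReal.ofReal_le_ofReal
        refine mul_le_mul_of_nonneg_left (Finset.sum_le_sum fun i _ => ?_) hc0
        exact Real.rpow_le_rpow (by positivity) (by exact_mod_cast hxu i) hp0
    _ = ∑ i : Fin n, ENNReal.ofReal c * ∫⁻ k, ENNReal.ofReal (((k : ℝ) + 1) ^ p) ∂ν := by
        rw [lintegral_finsetSum _ (fun i _ => measurable_of_countable _)]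
        refine Finset.sum_congr rfl fun i _ => ?_
        rw [lintegral_const_mul _ (measurable_of_countable _)]
        congr 1
        exact (measurePreserving_eval (fun _ : Fin n => ν) i).lintegral_comp
          (f := fun k : ℕ => ENNReal.ofReal (((k : ℝ) + 1) ^ p)) (measurable_of_countable _)
    _ = _ := by
        rw [Finset.sum_const, Finset.card_univ, Fintype.card_fin, nsmul_eq_mul,
          ENNReal.ofReal_mul (by positivity), ENNReal.ofReal_natCast, mul_assoc]

lemma main_limit (ν : Measure ℕ) [IsProbabilityMeasure ν] (hzero : ν {0} = 0)
    (p : ℝ) (hp0 : 0 ≤ p) (hp2 : p ≤ 2)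
    (hfin : ∫⁻ k, ENNReal.ofReal (((k : ℝ) + 1) ^ p) ∂ν ≠ ⊤)
    (K a : ℝ) (hK : 0 < K) (ha : 1 - p < a) :
    Tendsto (fun n : ℕ =>
            ((cmLaw n ν) {q : (Fin n → ℕ) × (Fin n → Fin n → ℕ) |
                K * (n : ℝ) ^ a <
                  ∑' k : ℕ, |empDens (eraseDeg q.2) k - empDens q.1 k|}).toReal)
          atTop (nhds 0) := by
  set m := ∫⁻ k, ENNReal.ofReal (((k : ℝ) + 1) ^ p) ∂ν with hm
  have hlim : Tendsto (fun n : ℕ => √(24 / K * (n : ℝ) ^ (-(a + p - 1))) * m.toReal) atTop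
      (nhds 0) := by
    have h1 : Tendsto (fun n : ℕ => (n : ℝ) ^ (-(a + p - 1))) atTop (nhds 0) :=
      (tendsto_rpow_neg_atTop (by linarith)).comp tendsto_natCast_atTop_atTop
    have h2 := ((h1.const_mul (24 / K)).sqrt).mul_const m.toReal
    simpa using h2
  refine squeeze_zero' (Eventually.of_forall fun n => ENNReal.toReal_nonneg) ?_ hlim
  filter_upwards [eventually_ge_atTop 4] with n hn
  have hn0 : (0 : ℝ) < n := by
    have : 0 < n := by omega
    exact_mod_cast this
  have hb := law_bound ν hzero n hn p hp0 hp2 (K * (n : ℝ) ^ a) (by positivity)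
  have hb2 := ENNReal.toReal_mono (ENNReal.mul_ne_top ENNReal.ofReal_ne_top hfin) hb
  rw [ENNReal.toReal_mul, ENNReal.toReal_ofReal (by positivity)] at hb2
  refine hb2.trans (le_of_eq ?_)
  congr 1
  have hs : ∀ y : ℝ, (n : ℝ) * √y = √((n : ℝ) ^ 2 * y) := fun y => by
    rw [Real.sqrt_mul (sq_nonneg _), Real.sqrt_sq hn0.le]
  rw [hs]
  congr 1
  have e : (n : ℝ) ^ (-(a + p - 1)) = (n : ℝ) ^ 2 * (n : ℝ) ^ (-p - 1) / (n : ℝ) ^ a := by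
    rw [← Real.rpow_natCast, ← Real.rpow_add hn0, ← Real.rpow_sub hn0]
    congr 1
    push_cast
    ring
  rw [e]
  field_simp

/-- For `𝒟` regularly varying with exponent `γ > 1`, in the erased
configuration model: if `1 < γ < 2` then for any `K, δ > 0`,
`P(Σ_k |f̂_n(k) − f_n(k)| > K n^{1−γ+δ}) → 0`, while if `γ > 2` then for any `K, δ > 0`,
`P(Σ_k |f̂_n(k) − f_n(k)| > K n^{−1+δ}) → 0`. -/
theorem stmt16 (ν : Measure ℕ) [IsProbabilityMeasure ν] (f : ℕ → ℝ)
    (hf : ∀ k, f k = (ν {k}).toReal) (hzero : ν {0} = 0)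
    (γ : ℝ) (hγ : 1 < γ)
    (l : ℝ → ℝ) (hsv : SlowlyVarying l) (hmono : EventuallyMonotone l)
    (hreg : ∀ k : ℕ, 1 ≤ k → f k = l k * (k : ℝ) ^ (-γ - 1)) :
    (γ < 2 → ∀ K δ : ℝ, 0 < K → 0 < δ →
        Tendsto (fun n : ℕ =>
            ((cmLaw n ν) {p : (Fin n → ℕ) × (Fin n → Fin n → ℕ) |
                K * (n : ℝ) ^ (1 - γ + δ) <
                  ∑' k : ℕ, |empDens (eraseDeg p.2) k - empDens p.1 k|}).toReal)
          atTop (nhds 0)) ∧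
      (2 < γ → ∀ K δ : ℝ, 0 < K → 0 < δ →
        Tendsto (fun n : ℕ =>
            ((cmLaw n ν) {p : (Fin n → ℕ) × (Fin n → Fin n → ℕ) |
                K * (n : ℝ) ^ (-1 + δ) <
                  ∑' k : ℕ, |empDens (eraseDeg p.2) k - empDens p.1 k|}).toReal)
          atTop (nhds 0)) := by
  refine ⟨fun h2 K δ hK hδ => ?_, fun h2 K δ hK hδ => ?_⟩
  · have hp1 : 1 ≤ max 1 (γ - δ / 2) := le_max_left _ _
    have hpd : γ - δ / 2 ≤ max 1 (γ - δ / 2) := le_max_right _ _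
    have hpg : max 1 (γ - δ / 2) < γ := max_lt hγ (by linarith)
    exact main_limit ν hzero (max 1 (γ - δ / 2)) (by linarith) (by linarith)
      (moment_finite ν f hf γ l hsv hmono hreg _ (by linarith) hpg) K _ hK (by linarith)
  · exact main_limit ν hzero 2 (by norm_num) le_rfl
      (moment_finite ν f hf γ l hsv hmono hreg 2 (by norm_num) h2) K _ hK (by linarith)

end ANNDPaper
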